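/- Let T > 0, α ∈ ℕ^d a multi-index and β ∈ ℕ^d a multi-index. For every u₀ ∈ L²(ℝ^d) with ∫_{ℝ^d} (1+|x|)^{2|β|} |u₀(x)|² dx < ∞, the heat solution u with initial datum u₀ satisfies ∫_{ℝ^d} |x^β D_x^α u(T,x)|² dx ≤ 2^{|β|+1} (3^{|β|} (|α|+|β|)!)² (1+T)^{|β|} T^{−|α|} ∫_{ℝ^d} (1+|x|)^{2|β|} |u₀(x)|² dx, where x^β = x₁^{β₁}⋯x_d^{β_d}, D_x^α is the spatial partial derivative of multi-order α, and |α|, |β| are the sums of the entries of α, β. -/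

import Mathlib

open MeasureTheory Filter Topology Metric ENNReal NNReal

noncomputable section

/-- `sinc` with value 1 at 0. -/
def sinc' (x : ℝ) : ℝ := if x = 0 then 1 else Real.sin x / x

/-- The function `f_{N,n}(x) = ∏_j sin (π (N x_j - n_j)) / (π (N x_j - n_j))`. -/
def fN (d : ℕ) (N : ℝ) (n : Fin d → ℤ) (x : EuclideanSpace ℝ (Fin d)) : ℝ :=
  ∏ j, sinc' (Real.pi * (N * x j - n j))

/-- The lattice point `n / N` in `ℝ^d`. -/
def latticePt (d : ℕ) (N : ℝ) (n : Fin d → ℤ) : EuclideanSpace ℝ (Fin d) :=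
  WithLp.toLp 2 fun j => (n j : ℝ) / N

/-- The heat solution at time `t > 0` with initial datum `u₀ ∈ L²(ℝ^d)`:
`u(t,x) = (4πt)^{-d/2} ∫ e^{-|x-y|²/(4t)} u₀(y) dy`. -/
def heatSol (d : ℕ) (u₀ : EuclideanSpace ℝ (Fin d) → ℝ) (t : ℝ)
    (x : EuclideanSpace ℝ (Fin d)) : ℝ :=
  (4 * Real.pi * t) ^ (-(d : ℝ) / 2) * ∫ y, Real.exp (-‖x - y‖ ^ 2 / (4 * t)) * u₀ y

/-- The family `F` is summable in `L²(ℝ^d)` with sum `g`: the finite partial sums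
converge to `g` in the `L²` norm along the filter of finite subsets of `ℤ^d`. -/
def HasSumL2 (d : ℕ) {V : Type} [NormedAddCommGroup V]
    (F : (Fin d → ℤ) → EuclideanSpace ℝ (Fin d) → V)
    (g : EuclideanSpace ℝ (Fin d) → V) : Prop :=
  Tendsto (fun s : Finset (Fin d → ℤ) =>
    eLpNorm (fun x => g x - ∑ n ∈ s, F n x) 2 volume) atTop (𝓝 0)

/-- The closed cube `Q_r(0)` in `ℝ^d`, centered at the origin, of side length `2r`. -/
def Qcube (d : ℕ) (r : ℝ) : Set (EuclideanSpace ℝ (Fin d)) := {ξ | ∀ j, |ξ j| ≤ r}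

/-- The truncated Fourier integral, with the paper's normalization
`(2π)^{-d/2} ∫_{|x| ≤ R} e^{-i x·ξ} f(x) dx`. -/
def truncFT (d : ℕ) (f : EuclideanSpace ℝ (Fin d) → ℂ) (R : ℝ)
    (ξ : EuclideanSpace ℝ (Fin d)) : ℂ :=
  (((2 * Real.pi) ^ (-(d : ℝ) / 2) : ℝ) : ℂ) *
    ∫ x in closedBall (0 : EuclideanSpace ℝ (Fin d)) R,
      Complex.exp (-(Complex.I * ((inner ℝ x ξ : ℝ) : ℂ))) * f x

/-- `fhat` is the Fourier transform of `f ∈ L²(ℝ^d)` in the `L²` (Plancherel) sense: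
`fhat ∈ L²` and the Fourier integrals of the truncations of `f` converge to `fhat`
in the `L²` norm. -/
def IsL2Fourier (d : ℕ) (f fhat : EuclideanSpace ℝ (Fin d) → ℂ) : Prop :=
  MemLp fhat 2 volume ∧
    Tendsto (fun R : ℝ => eLpNorm (fun ξ => fhat ξ - truncFT d f R ξ) 2 volume)
      atTop (𝓝 0)

/-- The `L²(ℝ^d)` norm of a function, as a real number. -/
def l2norm (d : ℕ) {V : Type} [NormedAddCommGroup V]
    (f : EuclideanSpace ℝ (Fin d) → V) : ℝ :=
  (eLpNorm f 2 volume).toReal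

/-- Partial derivative in the `j`-th coordinate direction. -/
def pderiv' (d : ℕ) (j : Fin d) (f : EuclideanSpace ℝ (Fin d) → ℝ) :
    EuclideanSpace ℝ (Fin d) → ℝ :=
  fun x => fderiv ℝ f x (EuclideanSpace.single j 1)

/-- The partial derivative `D^α` of multi-order `α ∈ ℕ^d`. -/
def mderiv (d : ℕ) (α : Fin d → ℕ) (f : EuclideanSpace ℝ (Fin d) → ℝ) :
    EuclideanSpace ℝ (Fin d) → ℝ :=
  ((List.finRange d).map (fun j => (pderiv' d j)^[α j])).foldr (· ∘ ·) id f

/-!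
With `b = 1 / (4T)`, the derivative `D^α` of the heat kernel at time `T` is a constant times
`∏ i, H_{α i}(z i) e^{-b (z i)²}`, where `H_n` is the `n`-th Hermite polynomial for the weight
`e^{-b t²}`. Write this Gaussian as the product of two equal factors `e^{-b |z|² / 2}` and use
`|x^β| ≤ (∏ i, (1 + |x i - y i|)^{β i}) (1 + |y|)^{|β|}`. Cauchy–Schwarz in `y` separates the
polynomial weight from the Hermite polynomials, each multiplied by one half of the Gaussian, and
integrating in `x` leaves the product of their squared `L²` norms with `∫ (1 + |y|)^{2|β|} |u₀|²`.
Both norms factor over the coordinates. The Hermite factor is computed by integration by parts, and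
the moment of the weight is bounded through `s^n ≤ n! e^s`.
-/

section GaussianDecay

open Asymptotics

variable {E F : Type*} [NormedAddCommGroup E] [NormedAddCommGroup F] {c : ℝ}

theorem exp_neg_mul_sq_norm_le_of_norm_sub_le_one (hc : 0 ≤ c) {x y : E} (h : ‖x - y‖ ≤ 1) :
    Real.exp (-c * ‖y‖ ^ 2) ≤ Real.exp c * Real.exp (-(c / 2) * ‖x‖ ^ 2) := by
  have hnorm : ‖x‖ ≤ 1 + ‖y‖ := by linarith [norm_le_norm_sub_add x y]
  have hsq : ‖x‖ ^ 2 ≤ 2 + 2 * ‖y‖ ^ 2 := by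
    nlinarith [norm_nonneg x, norm_nonneg y, sq_nonneg (1 - ‖y‖)]
  rw [← Real.exp_add]
  gcongr
  nlinarith

variable [InnerProductSpace ℝ E] [FiniteDimensional ℝ E] [MeasurableSpace E] [BorelSpace E]

theorem integrable_exp_neg_mul_sq_norm (hc : 0 < c) :
    Integrable fun z : E => Real.exp (-c * ‖z‖ ^ 2) :=
  .of_integral_ne_zero <| by
    rw [GaussianFourier.integral_rexp_neg_mul_sq_norm hc]
    positivity

theorem memLp_exp_neg_mul_sq_norm (hc : 0 < c) (p : ℝ≥0∞) :
    MemLp (fun z : E => Real.exp (-c * ‖z‖ ^ 2)) p := by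
  have hmeas : AEStronglyMeasurable fun z : E => Real.exp (-c * ‖z‖ ^ 2) :=
    (by fun_prop : Continuous fun z : E => Real.exp (-c * ‖z‖ ^ 2)).aestronglyMeasurable
  rcases eq_or_ne p 0 with rfl | hp₀
  · exact memLp_zero_iff_aestronglyMeasurable.2 hmeas
  rcases eq_or_ne p ∞ with rfl | hp
  · refine memLp_top_of_bound hmeas 1 (.of_forall fun z => ?_)
    rw [Real.norm_eq_abs, Real.abs_exp, Real.exp_le_one_iff]
    nlinarith [sq_nonneg ‖z‖]
  rw [← integrable_norm_rpow_iff hmeas hp₀ hp]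
  refine (integrable_exp_neg_mul_sq_norm (mul_pos hc (ENNReal.toReal_pos hp₀ hp))).congr
    (.of_forall fun z => ?_)
  simp only [Real.norm_eq_abs, Real.abs_exp, ← Real.exp_mul]
  ring_nf

theorem memLp_of_isBigO_exp_neg_mul_sq_norm (hc : 0 < c) {f : E → F} (hf : Continuous f)
    (hfO : f =O[⊤] fun z => Real.exp (-c * ‖z‖ ^ 2)) (p : ℝ≥0∞) : MemLp f p := by
  obtain ⟨B, hB⟩ := isBigO_top.1 hfO
  exact (memLp_exp_neg_mul_sq_norm hc p).of_le_mul hf.aestronglyMeasurable (.of_forall hB)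

variable [NormedSpace ℝ F]

theorem integrable_smul_comp_sub_left (hc : 0 < c) {f : E → F} (hf : Continuous f)
    (hfO : f =O[⊤] fun z => Real.exp (-c * ‖z‖ ^ 2)) {u : E → ℝ} (hu : MemLp u 2) (x : E) :
    Integrable fun y => u y • f (x - y) :=
  memLp_one_iff_integrable.1 <|
    ((memLp_of_isBigO_exp_neg_mul_sq_norm hc hf hfO 2).comp_measurePreserving
      (Measure.measurePreserving_sub_left volume x)).smul hu

theorem hasFDerivAt_integral_smul_comp_sub (hc : 0 < c) {k : E → F} {k' : E → E →L[ℝ] F}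
    (hk : ∀ z, HasFDerivAt k (k' z) z) (hk' : Continuous k')
    (hkO : k =O[⊤] fun z => Real.exp (-c * ‖z‖ ^ 2))
    (hk'O : k' =O[⊤] fun z => Real.exp (-c * ‖z‖ ^ 2)) {u : E → ℝ} (hu : MemLp u 2) (x : E) :
    HasFDerivAt (fun x => ∫ y, u y • k (x - y)) (∫ y, u y • k' (x - y)) x := by
  have hkc : Continuous k := continuous_iff_continuousAt.2 fun z => (hk z).continuousAt
  obtain ⟨B, hB₀, hB⟩ := hk'O.exists_nonneg
  rw [isBigOWith_top] at hB
  have hbound : ∀ y, ∀ x' ∈ ball x 1, ‖u y • k' (x' - y)‖ ≤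
      B * Real.exp c * ‖u y • Real.exp (-(c / 2) * ‖x - y‖ ^ 2)‖ := by
    intro y x' hx'
    have hdist : ‖(x - y) - (x' - y)‖ ≤ 1 := by
      rw [sub_sub_sub_cancel_right, norm_sub_rev]
      exact (mem_ball_iff_norm.1 hx').le
    calc ‖u y • k' (x' - y)‖ ≤ ‖u y‖ * (B * Real.exp (-c * ‖x' - y‖ ^ 2)) := by
          rw [norm_smul]
          gcongr
          simpa only [Real.norm_eq_abs, Real.abs_exp] using hB (x' - y)
      _ ≤ ‖u y‖ * (B * (Real.exp c * Real.exp (-(c / 2) * ‖x - y‖ ^ 2))) := by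
          gcongr
          exact exp_neg_mul_sq_norm_le_of_norm_sub_le_one hc.le hdist
      _ = B * Real.exp c * ‖u y • Real.exp (-(c / 2) * ‖x - y‖ ^ 2)‖ := by
          rw [norm_smul, Real.norm_eq_abs (Real.exp _), Real.abs_exp]
          ring
  exact hasFDerivAt_integral_of_dominated_of_fderiv_le (ball_mem_nhds x one_pos)
    (.of_forall fun x' => (integrable_smul_comp_sub_left hc hkc hkO hu x').1)
    (integrable_smul_comp_sub_left hc hkc hkO hu x)
    (integrable_smul_comp_sub_left hc hk' hk'O hu x).1
    (.of_forall hbound)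
    ((integrable_smul_comp_sub_left (half_pos hc) (by fun_prop)
      (isBigO_refl (fun z : E => Real.exp (-(c / 2) * ‖z‖ ^ 2)) ⊤) hu x).norm.const_mul _)
    (.of_forall fun y x' _ => ((hasFDerivAt_comp_sub y).2 (hk (x' - y))).const_smul (u y))

end GaussianDecay

section PolynomialGaussian

open Asymptotics Polynomial

/-- The function `q(t) e^{-b t²}` on the real line, for a polynomial `q`. -/
def polyGaussian (b : ℝ) (q : ℝ[X]) (t : ℝ) : ℝ :=
  q.eval t * Real.exp (-b * t ^ 2)

/-- The action of `d/dt` on the polynomial factor of `q(t) e^{-b t²}`. -/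
def polyGaussianDeriv (b : ℝ) (q : ℝ[X]) : ℝ[X] :=
  derivative q - C (2 * b) * X * q

/-- The Hermite polynomial `H` with `(d/dt)ⁿ e^{-b t²} = H(t) e^{-b t²}`; no normalization, and the
sign `(-1)ⁿ` is included. -/
def gaussianHermite (b : ℝ) (n : ℕ) : ℝ[X] :=
  (polyGaussianDeriv b)^[n] 1

theorem isBigO_eval_exp_mul_sq {c : ℝ} (hc : 0 < c) (q : ℝ[X]) :
    (fun t => q.eval t) =O[⊤] fun t => Real.exp (c * t ^ 2) := by
  induction q using Polynomial.induction_on' with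
  | add p q hp hq => simpa only [eval_add] using hp.add hq
  | monomial n a =>
    simp only [eval_monomial]
    refine IsBigO.const_mul_left (isBigO_top.2 ⟨1 + n.factorial / c ^ n, fun t => ?_⟩) a
    rw [Real.norm_eq_abs, Real.norm_eq_abs, Real.abs_exp]
    have hone : 1 ≤ Real.exp (c * t ^ 2) := Real.one_le_exp (by positivity)
    have heven : (t ^ n) ^ 2 ≤ n.factorial / c ^ n * Real.exp (c * t ^ 2) := by
      calc (t ^ n) ^ 2 = n.factorial / c ^ n * ((c * t ^ 2) ^ n / n.factorial) := by
            rw [mul_pow, pow_right_comm]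
            field_simp
        _ ≤ n.factorial / c ^ n * Real.exp (c * t ^ 2) := by
            gcongr
            exact Real.pow_div_factorial_le_exp _ (by positivity) n
    calc |t ^ n| ≤ 1 + (t ^ n) ^ 2 := by
          nlinarith [sq_nonneg (|t ^ n| - 1), abs_nonneg (t ^ n), sq_abs (t ^ n)]
      _ ≤ (1 + n.factorial / c ^ n) * Real.exp (c * t ^ 2) := by linarith

variable {b : ℝ}

@[fun_prop]
theorem continuous_polyGaussian (b : ℝ) (q : ℝ[X]) : Continuous (polyGaussian b q) := by
  unfold polyGaussian
  fun_prop

theorem polyGaussian_half_sq (b : ℝ) (q : ℝ[X]) (t : ℝ) :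
    polyGaussian (b / 2) q t ^ 2 = polyGaussian b (q ^ 2) t := by
  rw [polyGaussian, polyGaussian, mul_pow, ← Real.exp_nat_mul, eval_pow]
  ring_nf

theorem exp_mul_polyGaussian_half (b : ℝ) (q : ℝ[X]) (t : ℝ) :
    Real.exp (-(b / 2) * t ^ 2) * polyGaussian (b / 2) q t = polyGaussian b q t := by
  rw [polyGaussian, polyGaussian, mul_left_comm, ← Real.exp_add]
  ring_nf

theorem isBigO_polyGaussian {c : ℝ} (hcb : c < b) (q : ℝ[X]) :
    polyGaussian b q =O[⊤] fun t => Real.exp (-c * t ^ 2) := by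
  refine ((isBigO_eval_exp_mul_sq (sub_pos.2 hcb) q).mul
    (isBigO_refl (fun t => Real.exp (-b * t ^ 2)) ⊤)).congr_right fun t => ?_
  rw [← Real.exp_add]
  ring_nf

theorem integrable_polyGaussian (hb : 0 < b) (q : ℝ[X]) : Integrable (polyGaussian b q) :=
  memLp_one_iff_integrable.1 <| memLp_of_isBigO_exp_neg_mul_sq_norm (half_pos hb)
    (continuous_polyGaussian b q)
    (by simpa only [Real.norm_eq_abs, sq_abs] using isBigO_polyGaussian (half_lt_self hb) q) 1

theorem hasDerivAt_polyGaussian (b : ℝ) (q : ℝ[X]) (t : ℝ) :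
    HasDerivAt (polyGaussian b q) (polyGaussian b (polyGaussianDeriv b q) t) t := by
  have hexponent : HasDerivAt (fun t : ℝ => -b * t ^ 2) (-b * (2 * t)) t := by
    simpa using (hasDerivAt_pow 2 t).const_mul (-b)
  refine ((q.hasDerivAt t).mul hexponent.exp).congr_deriv ?_
  simp only [polyGaussian, polyGaussianDeriv, eval_sub, eval_mul, eval_C, eval_X]
  ring

theorem gaussianHermite_succ (b : ℝ) (n : ℕ) :
    gaussianHermite b (n + 1) = polyGaussianDeriv b (gaussianHermite b n) :=
  Function.iterate_succ_apply' ..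

theorem derivative_gaussianHermite_succ (b : ℝ) (n : ℕ) :
    derivative (gaussianHermite b (n + 1)) = C (-(2 * b * (n + 1))) * gaussianHermite b n := by
  induction n with
  | zero => simp [gaussianHermite, polyGaussianDeriv]
  | succ n ih =>
    have hcomm (q : ℝ[X]) : derivative (polyGaussianDeriv b q) =
        polyGaussianDeriv b (derivative q) - C (2 * b) * q := by
      simp only [polyGaussianDeriv, derivative_sub, derivative_mul, derivative_C, derivative_X]
      ring
    have hlinear (a : ℝ) (q : ℝ[X]) :
        polyGaussianDeriv b (C a * q) = C a * polyGaussianDeriv b q := by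
      simp only [polyGaussianDeriv, derivative_C_mul]
      ring
    rw [gaussianHermite_succ b (n + 1), hcomm, ih, hlinear, ← gaussianHermite_succ, ← sub_mul,
      ← C_sub]
    push_cast
    ring_nf

theorem integral_polyGaussian_mul_polyGaussianDeriv (hb : 0 < b) (p q : ℝ[X]) :
    ∫ t, polyGaussian b (p * polyGaussianDeriv b q) t =
      -∫ t, polyGaussian b (derivative p * q) t := by
  have hmul (r s : ℝ[X]) :
      (fun t => r.eval t * polyGaussian b s t) = polyGaussian b (r * s) := by
    ext t
    simp only [polyGaussian, eval_mul, mul_assoc]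
  have hint (r s : ℝ[X]) : Integrable fun t => r.eval t * polyGaussian b s t :=
    hmul r s ▸ integrable_polyGaussian hb (r * s)
  simpa only [hmul] using integral_mul_deriv_eq_deriv_mul_of_integrable
    (fun t _ => p.hasDerivAt t) (fun t _ => hasDerivAt_polyGaussian b q t)
    (hint p (polyGaussianDeriv b q)) (hint (derivative p) q) (hint p q)

theorem integral_polyGaussian_gaussianHermite_sq (hb : 0 < b) (n : ℕ) :
    ∫ t, polyGaussian b (gaussianHermite b n ^ 2) t =
      n.factorial * (2 * b) ^ n * √(Real.pi / b) := by
  induction n with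
  | zero => simpa [polyGaussian, gaussianHermite] using integral_gaussian b
  | succ n ih =>
    calc ∫ t, polyGaussian b (gaussianHermite b (n + 1) ^ 2) t
        = -∫ t, polyGaussian b
            (derivative (gaussianHermite b (n + 1)) * gaussianHermite b n) t := by
          rw [← integral_polyGaussian_mul_polyGaussianDeriv hb, ← gaussianHermite_succ, sq]
      _ = 2 * b * (n + 1) * ∫ t, polyGaussian b (gaussianHermite b n ^ 2) t := by
          rw [derivative_gaussianHermite_succ, ← integral_neg, ← integral_const_mul]
          refine integral_congr_ae (.of_forall fun t => ?_)
          simp only [polyGaussian, eval_mul, eval_C, eval_pow]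
          ring
      _ = (n + 1).factorial * (2 * b) ^ (n + 1) * √(Real.pi / b) := by
          rw [ih, Nat.factorial_succ]
          push_cast
          ring

end PolynomialGaussian

section HermiteKernel

open Asymptotics

variable {ι : Type*} [Fintype ι] {b : ℝ}

/-- The partial derivative of order `α` of the Gaussian `e^{-b|z|²}` on `ℝ^ι`, written as a product
of one-dimensional factors. -/
def hermiteKernel (b : ℝ) (α : ι → ℕ) (z : EuclideanSpace ℝ ι) : ℝ :=
  ∏ i, polyGaussian b (gaussianHermite b (α i)) (z i)

/-- The convolution of `u` with the partial derivative of order `α` of `e^{-b|z|²}`. -/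
def hermiteConv (b : ℝ) (u : EuclideanSpace ℝ ι → ℝ) (α : ι → ℕ) (x : EuclideanSpace ℝ ι) : ℝ :=
  ∫ y, u y * hermiteKernel b α (x - y)

theorem exp_mul_sq_norm_eq_prod (c : ℝ) (z : EuclideanSpace ℝ ι) :
    Real.exp (c * ‖z‖ ^ 2) = ∏ i, Real.exp (c * z i ^ 2) := by
  rw [← Real.exp_sum, EuclideanSpace.real_norm_sq_eq, Finset.mul_sum]

theorem hermiteKernel_zero (b : ℝ) (z : EuclideanSpace ℝ ι) :
    hermiteKernel b 0 z = Real.exp (-b * ‖z‖ ^ 2) := by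
  rw [exp_mul_sq_norm_eq_prod]
  simp [hermiteKernel, polyGaussian, gaussianHermite]

@[fun_prop]
theorem continuous_hermiteKernel (b : ℝ) (α : ι → ℕ) : Continuous (hermiteKernel b α) := by
  unfold hermiteKernel
  fun_prop

theorem isBigO_hermiteKernel {c : ℝ} (hcb : c < b) (α : ι → ℕ) :
    hermiteKernel b α =O[⊤] fun z => Real.exp (-c * ‖z‖ ^ 2) := by
  simp only [exp_mul_sq_norm_eq_prod]
  exact .finsetProd fun i _ => (isBigO_polyGaussian hcb (gaussianHermite b (α i))).comp_tendsto
    (k := fun z : EuclideanSpace ℝ ι => z i) tendsto_top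

theorem hasFDerivAt_hermiteKernel [DecidableEq ι] (b : ℝ) (α : ι → ℕ) (z : EuclideanSpace ℝ ι) :
    HasFDerivAt (hermiteKernel b α)
      (∑ j, hermiteKernel b (α + Pi.single j 1) z •
        (EuclideanSpace.proj j : EuclideanSpace ℝ ι →L[ℝ] ℝ)) z := by
  have hfactor (i : ι) : HasFDerivAt
      (fun z : EuclideanSpace ℝ ι => polyGaussian b (gaussianHermite b (α i)) (z i))
      (polyGaussian b (gaussianHermite b (α i + 1)) (z i) •
        (EuclideanSpace.proj i : EuclideanSpace ℝ ι →L[ℝ] ℝ)) z := by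
    rw [gaussianHermite_succ]
    exact (hasDerivAt_polyGaussian b (gaussianHermite b (α i)) (z i)).comp_hasFDerivAt z
      (EuclideanSpace.proj i : EuclideanSpace ℝ ι →L[ℝ] ℝ).hasFDerivAt
  refine (HasFDerivAt.finsetProd fun i _ => hfactor i).congr_fderiv
    (Finset.sum_congr rfl fun j _ => ?_)
  rw [smul_smul, hermiteKernel, ← Finset.prod_erase_mul _ _ (Finset.mem_univ j), Pi.add_apply,
    Pi.single_eq_same]
  congr 2
  refine Finset.prod_congr rfl fun i hi => ?_
  rw [Pi.add_apply, Pi.single_eq_of_ne (Finset.ne_of_mem_erase hi), add_zero]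

theorem hasFDerivAt_hermiteConv [DecidableEq ι] (hb : 0 < b) {u : EuclideanSpace ℝ ι → ℝ}
    (hu : MemLp u 2) (α : ι → ℕ) (x : EuclideanSpace ℝ ι) :
    HasFDerivAt (hermiteConv b u α)
      (∑ j, hermiteConv b u (α + Pi.single j 1) x •
        (EuclideanSpace.proj j : EuclideanSpace ℝ ι →L[ℝ] ℝ)) x := by
  have hc : 0 < b / 2 := half_pos hb
  have hO (γ : ι → ℕ) := isBigO_hermiteKernel (half_lt_self hb) γ
  refine (hasFDerivAt_integral_smul_comp_sub hc (hasFDerivAt_hermiteKernel b α) (by fun_prop)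
    (hO α) (.fun_sum fun j _ => ?_) hu x).congr_fderiv ?_
  · simpa only [smul_eq_mul, mul_one] using (hO (α + Pi.single j 1)).smul
      (isBigO_const_const (EuclideanSpace.proj j : EuclideanSpace ℝ ι →L[ℝ] ℝ)
        (one_ne_zero (α := ℝ)) ⊤)
  · simp only [Finset.smul_sum, ← smul_assoc]
    refine (integral_finsetSum _ fun j _ => (integrable_smul_comp_sub_left hc
      (continuous_hermiteKernel b _) (hO (α + Pi.single j 1)) hu x).smul_const _).trans ?_
    simp only [integral_smul_const, hermiteConv, smul_eq_mul]

end HermiteKernel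

section HeatSolution

variable {d : ℕ} {b : ℝ} {u : EuclideanSpace ℝ (Fin d) → ℝ}

theorem mderiv_eq_of_pderiv'_eq {f : (Fin d → ℕ) → EuclideanSpace ℝ (Fin d) → ℝ}
    (hf : ∀ γ j, pderiv' d j (f γ) = f (γ + Pi.single j 1)) (α : Fin d → ℕ) :
    mderiv d α (f 0) = f α := by
  have hiterate (j : Fin d) (n : ℕ) (γ : Fin d → ℕ) :
      (pderiv' d j)^[n] (f γ) = f (γ + Pi.single j n) := by
    induction n with
    | zero => simp
    | succ n ih =>
      rw [Function.iterate_succ_apply', ih, hf, add_assoc, ← Pi.single_add]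
  have hfold (l : List (Fin d)) :
      (l.map fun j => (pderiv' d j)^[α j]).foldr (· ∘ ·) id (f 0) =
        f (l.map fun j => Pi.single j (α j)).sum := by
    induction l with
    | nil => rfl
    | cons j l ih =>
      rw [List.map_cons, List.foldr_cons, Function.comp_apply, ih, hiterate, List.map_cons,
        List.sum_cons, add_comm]
  rw [mderiv, hfold, ← List.ofFn_eq_map, List.sum_ofFn, Finset.univ_sum_single]

theorem pderiv'_smul_hermiteConv (hb : 0 < b) (hu : MemLp u 2) (c : ℝ) (γ : Fin d → ℕ)
    (j : Fin d) :
    pderiv' d j (c • hermiteConv b u γ) = c • hermiteConv b u (γ + Pi.single j 1) := by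
  ext x
  rw [pderiv', ((hasFDerivAt_hermiteConv hb hu γ x).const_smul c).fderiv]
  simp

theorem heatSol_eq_smul_hermiteConv (u : EuclideanSpace ℝ (Fin d) → ℝ) (t : ℝ) :
    heatSol d u t =
      (4 * Real.pi * t) ^ (-(d : ℝ) / 2) • hermiteConv (1 / (4 * t)) u 0 := by
  ext x
  rw [heatSol, Pi.smul_apply, smul_eq_mul, hermiteConv]
  congr 2 with y
  rw [hermiteKernel_zero, mul_comm]
  ring_nf

theorem mderiv_heatSol {t : ℝ} (ht : 0 < t) (hu : MemLp u 2) (α : Fin d → ℕ) :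
    mderiv d α (heatSol d u t) =
      (4 * Real.pi * t) ^ (-(d : ℝ) / 2) • hermiteConv (1 / (4 * t)) u α := by
  rw [heatSol_eq_smul_hermiteConv]
  exact mderiv_eq_of_pderiv'_eq
    (fun γ j => pderiv'_smul_hermiteConv (by positivity) hu _ γ j) α

end HeatSolution

section Convolution

theorem sq_lintegral_mul_le {X : Type*} [MeasurableSpace X] {μ : Measure X} {f g : X → ℝ≥0∞}
    (hf : AEMeasurable f μ) (hg : AEMeasurable g μ) :
    (∫⁻ a, f a * g a ∂μ) ^ 2 ≤ (∫⁻ a, f a ^ 2 ∂μ) * ∫⁻ a, g a ^ 2 ∂μ := by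
  have hsqrt (r : ℝ≥0∞) : (r ^ (1 / 2 : ℝ)) ^ 2 = r := by
    rw [← ENNReal.rpow_mul_natCast]
    norm_num
  have hcs := ENNReal.lintegral_mul_le_Lp_mul_Lq μ Real.HolderConjugate.two_two hf hg
  simp only [Pi.mul_apply, ENNReal.rpow_two] at hcs
  calc (∫⁻ a, f a * g a ∂μ) ^ 2
      ≤ ((∫⁻ a, f a ^ 2 ∂μ) ^ (1 / 2 : ℝ) * (∫⁻ a, g a ^ 2 ∂μ) ^ (1 / 2 : ℝ)) ^ 2 := by gcongr
    _ = (∫⁻ a, f a ^ 2 ∂μ) * ∫⁻ a, g a ^ 2 ∂μ := by rw [mul_pow, hsqrt, hsqrt]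

theorem lintegral_sq_lintegral_comp_sub_le {G : Type*} [AddGroup G] [MeasurableSpace G]
    [MeasurableAdd₂ G] [MeasurableNeg G] {μ : Measure G} [SFinite μ] [μ.IsAddLeftInvariant]
    [μ.IsAddRightInvariant] [μ.IsNegInvariant] {f g h : G → ℝ≥0∞} (hf : Measurable f)
    (hg : Measurable g) (hh : AEMeasurable h μ) :
    ∫⁻ x, (∫⁻ y, f (x - y) * (g (x - y) * h y) ∂μ) ^ 2 ∂μ ≤
      (∫⁻ z, f z ^ 2 ∂μ) * (∫⁻ z, g z ^ 2 ∂μ) * ∫⁻ y, h y ^ 2 ∂μ := by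
  have hpointwise (x : G) : (∫⁻ y, f (x - y) * (g (x - y) * h y) ∂μ) ^ 2 ≤
      (∫⁻ z, f z ^ 2 ∂μ) * ∫⁻ y, g (x - y) ^ 2 * h y ^ 2 ∂μ := by
    have hfx : Measurable fun y => f (x - y) := by fun_prop
    have hgx : Measurable fun y => g (x - y) := by fun_prop
    simpa only [Pi.mul_apply, mul_pow, lintegral_sub_left_eq_self fun z => f z ^ 2] using
      sq_lintegral_mul_le hfx.aemeasurable (hgx.aemeasurable.mul hh)
  have hmeas : AEMeasurable (fun p : G × G => g (p.1 - p.2) ^ 2 * h p.2 ^ 2) (μ.prod μ) :=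
    (by fun_prop : Measurable fun p : G × G => g (p.1 - p.2) ^ 2).aemeasurable.mul
      (hh.comp_snd.pow_const 2)
  calc ∫⁻ x, (∫⁻ y, f (x - y) * (g (x - y) * h y) ∂μ) ^ 2 ∂μ
      ≤ ∫⁻ x, (∫⁻ z, f z ^ 2 ∂μ) * ∫⁻ y, g (x - y) ^ 2 * h y ^ 2 ∂μ ∂μ :=
        lintegral_mono hpointwise
    _ = (∫⁻ z, f z ^ 2 ∂μ) * ∫⁻ x, ∫⁻ y, g (x - y) ^ 2 * h y ^ 2 ∂μ ∂μ :=
        lintegral_const_mul'' _ hmeas.lintegral_prod_right'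
    _ = (∫⁻ z, f z ^ 2 ∂μ) * ∫⁻ y, ∫⁻ x, g (x - y) ^ 2 * h y ^ 2 ∂μ ∂μ := by
        rw [lintegral_lintegral_swap hmeas]
    _ = (∫⁻ z, f z ^ 2 ∂μ) * (∫⁻ z, g z ^ 2 ∂μ) * ∫⁻ y, h y ^ 2 ∂μ := by
        have hinner (y : G) : ∫⁻ x, g (x - y) ^ 2 * h y ^ 2 ∂μ =
            (∫⁻ z, g z ^ 2 ∂μ) * h y ^ 2 := by
          rw [lintegral_mul_const _ (by fun_prop),
            lintegral_sub_right_eq_self fun z => g z ^ 2]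
        simp only [hinner]
        rw [lintegral_const_mul'' _ (hh.pow_const 2), mul_assoc]

end Convolution

section WeightedEstimate

open Polynomial

variable {ι : Type*} [Fintype ι] {b : ℝ}

theorem enorm_sq_eq_ofReal_sq (a : ℝ) : ‖a‖ₑ ^ 2 = ENNReal.ofReal (a ^ 2) := by
  rw [Real.enorm_eq_ofReal_abs, ← ENNReal.ofReal_pow (abs_nonneg a), sq_abs]

theorem lintegral_enorm_prod_apply_sq {f : ι → ℝ → ℝ} (hf : ∀ i, Integrable fun t => f i t ^ 2) :
    ∫⁻ z : EuclideanSpace ℝ ι, ‖∏ i, f i (z i)‖ₑ ^ 2 =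
      ENNReal.ofReal (∏ i, ∫ t, f i t ^ 2) := by
  have hemb : MeasurableEmbedding (WithLp.ofLp (p := 2) (V := ι → ℝ)) :=
    (MeasurableEquiv.toLp 2 (ι → ℝ)).symm.measurableEmbedding
  have hprod : Integrable fun z : ι → ℝ => ∏ i, f i (z i) ^ 2 :=
    Integrable.fintype_prod (f := fun i t => f i t ^ 2) (μ := fun _ => volume) hf
  simp only [enorm_sq_eq_ofReal_sq, ← Finset.prod_pow]
  rw [(PiLp.volume_preserving_ofLp ι).lintegral_comp_emb hemb
      fun z => ENNReal.ofReal (∏ i, f i (z i) ^ 2),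
    ← ofReal_integral_eq_lintegral_ofReal hprod
      (.of_forall fun z => Finset.prod_nonneg fun i _ => sq_nonneg _)]
  exact congrArg _ (integral_fintype_prod_volume_eq_prod fun i t => f i t ^ 2)

theorem abs_prod_pow_le (β : ι → ℕ) (x y : EuclideanSpace ℝ ι) :
    |∏ i, x i ^ β i| ≤ (∏ i, (1 + |(x - y) i|) ^ β i) * (1 + ‖y‖) ^ ∑ i, β i := by
  rw [Finset.abs_prod, ← Finset.prod_pow_eq_pow_sum, ← Finset.prod_mul_distrib]
  gcongr with i
  rw [abs_pow, ← mul_pow]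
  gcongr
  calc |x i| ≤ |(x - y) i| + |y i| := by simpa using abs_add_le ((x - y) i) (y i)
    _ ≤ |(x - y) i| + ‖y‖ := by gcongr; exact PiLp.norm_apply_le y i
    _ ≤ (1 + |(x - y) i|) * (1 + ‖y‖) := by
      nlinarith [mul_nonneg (abs_nonneg ((x - y) i)) (norm_nonneg y)]

theorem sq_one_add_abs_pow_mul_exp_le (hb : 0 < b) (n : ℕ) (t : ℝ) :
    ((1 + |t|) ^ n * Real.exp (-(b / 2) * t ^ 2)) ^ 2 ≤
      (4 * (1 + 1 / (2 * b))) ^ n * n.factorial * Real.exp (1 / 4) *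
        Real.exp (-(b / 2) * t ^ 2) := by
  -- Cauchy–Schwarz for `(1, 1 / √(2b))` and `(1, √(2b) |t|)`.
  have hsq : (1 + |t|) ^ 2 ≤ 4 * (1 + 1 / (2 * b)) * ((1 + 2 * b * t ^ 2) / 4) := by
    rw [← sq_abs t, ← sub_nonneg]
    calc 0 ≤ (1 - 2 * b * |t|) ^ 2 / (2 * b) := by positivity
      _ = 4 * (1 + 1 / (2 * b)) * ((1 + 2 * b * |t| ^ 2) / 4) - (1 + |t|) ^ 2 := by
        field_simp
        ring
  have hpow : ((1 + 2 * b * t ^ 2) / 4) ^ n ≤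
      n.factorial * (Real.exp (1 / 4) * Real.exp (b / 2 * t ^ 2)) := by
    rw [← Real.exp_add, ← div_le_iff₀' (by positivity)]
    refine (Real.pow_div_factorial_le_exp _ (by positivity) n).trans_eq ?_
    ring_nf
  calc ((1 + |t|) ^ n * Real.exp (-(b / 2) * t ^ 2)) ^ 2
      = ((1 + |t|) ^ 2) ^ n * Real.exp (-b * t ^ 2) := by
        rw [mul_pow, pow_right_comm, ← Real.exp_nat_mul]
        ring_nf
    _ ≤ (4 * (1 + 1 / (2 * b))) ^ n *
          (n.factorial * (Real.exp (1 / 4) * Real.exp (b / 2 * t ^ 2))) *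
            Real.exp (-b * t ^ 2) := by
        grw [hsq, mul_pow _ (_ / 4), hpow]
    _ = (4 * (1 + 1 / (2 * b))) ^ n * n.factorial * Real.exp (1 / 4) *
          (Real.exp (b / 2 * t ^ 2) * Real.exp (-b * t ^ 2)) := by ring
    _ = _ := by
        rw [← Real.exp_add (b / 2 * t ^ 2)]
        ring_nf

theorem integrable_sq_one_add_abs_pow_mul_exp (hb : 0 < b) (n : ℕ) :
    Integrable fun t : ℝ => ((1 + |t|) ^ n * Real.exp (-(b / 2) * t ^ 2)) ^ 2 :=
  ((integrable_exp_neg_mul_sq (half_pos hb)).const_mul _).mono'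
    (by fun_prop : Continuous _).aestronglyMeasurable
    (.of_forall fun t => by
      rw [Real.norm_of_nonneg (sq_nonneg _)]
      exact sq_one_add_abs_pow_mul_exp_le hb n t)

theorem integral_sq_one_add_abs_pow_mul_exp_le (hb : 0 < b) (n : ℕ) :
    ∫ t, ((1 + |t|) ^ n * Real.exp (-(b / 2) * t ^ 2)) ^ 2 ≤
      (8 * (1 + 1 / (2 * b))) ^ n * n.factorial * √(Real.pi / b) := by
  rcases eq_or_ne n 0 with rfl | hn
  · refine le_of_eq ?_
    simp only [pow_zero, one_mul, Nat.factorial_zero, Nat.cast_one, ← integral_gaussian,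
      ← Real.exp_nat_mul]
    ring_nf
  have hexp : Real.exp (1 / 4) * √2 ≤ 2 ^ n := by
    have hsq : (Real.exp (1 / 4) * √2) ^ 2 ≤ 2 ^ 2 := by
      calc (Real.exp (1 / 4) * √2) ^ 2 = Real.exp (1 / 2) * 2 := by
            rw [mul_pow, Real.sq_sqrt zero_le_two, ← Real.exp_nat_mul]
            norm_num
        _ ≤ 2 ^ 2 := by
            have := Real.exp_bound_div_one_sub_of_interval (x := 1 / 2) (by norm_num) (by norm_num)
            norm_num at this ⊢
            linarith
    exact (le_of_sq_le_sq hsq zero_le_two).trans (le_self_pow₀ one_le_two hn)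
  calc ∫ t, ((1 + |t|) ^ n * Real.exp (-(b / 2) * t ^ 2)) ^ 2
      ≤ ∫ t, (4 * (1 + 1 / (2 * b))) ^ n * n.factorial * Real.exp (1 / 4) *
          Real.exp (-(b / 2) * t ^ 2) :=
        integral_mono (integrable_sq_one_add_abs_pow_mul_exp hb n)
          ((integrable_exp_neg_mul_sq (half_pos hb)).const_mul _)
          (sq_one_add_abs_pow_mul_exp_le hb n)
    _ = (4 * (1 + 1 / (2 * b))) ^ n * n.factorial * √(Real.pi / b) * (Real.exp (1 / 4) * √2) := by
        rw [integral_const_mul, integral_gaussian, div_div_eq_mul_div, mul_div_right_comm,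
          Real.sqrt_mul (by positivity)]
        ring
    _ ≤ (4 * (1 + 1 / (2 * b))) ^ n * n.factorial * √(Real.pi / b) * 2 ^ n := by gcongr
    _ = (8 * (1 + 1 / (2 * b))) ^ n * n.factorial * √(Real.pi / b) := by
        rw [show (8 : ℝ) = 4 * 2 by norm_num, mul_pow, mul_pow, mul_pow]
        ring

theorem lintegral_enorm_prod_pow_mul_hermiteConv_sq_le_mul (hb : 0 < b)
    {u : EuclideanSpace ℝ ι → ℝ} (hu : AEStronglyMeasurable u) (α β : ι → ℕ) :
    ∫⁻ x, ‖(∏ i, x i ^ β i) * hermiteConv b u α x‖ₑ ^ 2 ≤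
      ENNReal.ofReal (∏ i, ∫ t, ((1 + |t|) ^ β i * Real.exp (-(b / 2) * t ^ 2)) ^ 2) *
        ENNReal.ofReal (∏ i, ∫ t, polyGaussian b (gaussianHermite b (α i) ^ 2) t) *
          ∫⁻ y, ‖(1 + ‖y‖) ^ (∑ i, β i) * u y‖ₑ ^ 2 := by
  let A (z : EuclideanSpace ℝ ι) : ℝ := ∏ i, (1 + |z i|) ^ β i * Real.exp (-(b / 2) * z i ^ 2)
  let B (z : EuclideanSpace ℝ ι) : ℝ := ∏ i, polyGaussian (b / 2) (gaussianHermite b (α i)) (z i)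
  let w (y : EuclideanSpace ℝ ι) : ℝ := (1 + ‖y‖) ^ (∑ i, β i) * u y
  have hsplit (z : EuclideanSpace ℝ ι) :
      A z * B z = (∏ i, (1 + |z i|) ^ β i) * hermiteKernel b α z := by
    simp only [A, B, hermiteKernel, ← Finset.prod_mul_distrib, mul_assoc,
      exp_mul_polyGaussian_half]
  have hpointwise (x y : EuclideanSpace ℝ ι) :
      ‖(∏ i, x i ^ β i) * (u y * hermiteKernel b α (x - y))‖ₑ ≤
        ‖A (x - y)‖ₑ * (‖B (x - y)‖ₑ * ‖w y‖ₑ) := by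
    rw [← enorm_mul, ← enorm_mul, enorm_le_iff_norm_le, ← mul_assoc (A _), hsplit]
    have habs : |∏ i, (1 + |(x - y) i|) ^ β i| = ∏ i, (1 + |(x - y) i|) ^ β i :=
      abs_of_nonneg (by positivity)
    have hweight : |(1 + ‖y‖) ^ (∑ i, β i)| = (1 + ‖y‖) ^ (∑ i, β i) :=
      abs_of_nonneg (by positivity)
    simp only [w, Real.norm_eq_abs, abs_mul, habs, hweight]
    grw [abs_prod_pow_le β x y]
    exact le_of_eq (by ring)
  have hw : AEMeasurable (fun y => ‖w y‖ₑ) := by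
    have : Continuous fun y : EuclideanSpace ℝ ι => (1 + ‖y‖) ^ (∑ i, β i) := by fun_prop
    exact (this.aestronglyMeasurable.mul hu).enorm
  calc ∫⁻ x, ‖(∏ i, x i ^ β i) * hermiteConv b u α x‖ₑ ^ 2
      ≤ ∫⁻ x, (∫⁻ y, ‖A (x - y)‖ₑ * (‖B (x - y)‖ₑ * ‖w y‖ₑ)) ^ 2 := by
        gcongr with x
        rw [hermiteConv, ← integral_const_mul]
        exact (enorm_integral_le_lintegral_enorm _).trans (lintegral_mono (hpointwise x))
    _ ≤ (∫⁻ z, ‖A z‖ₑ ^ 2) * (∫⁻ z, ‖B z‖ₑ ^ 2) * ∫⁻ y, ‖w y‖ₑ ^ 2 :=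
        lintegral_sq_lintegral_comp_sub_le
          (by fun_prop : Continuous A).enorm.measurable
          (by fun_prop : Continuous B).enorm.measurable hw
    _ = _ := by
        congr 2
        · exact lintegral_enorm_prod_apply_sq fun i =>
            integrable_sq_one_add_abs_pow_mul_exp hb (β i)
        · simp only [← polyGaussian_half_sq]
          exact lintegral_enorm_prod_apply_sq fun i => by
            simpa only [polyGaussian_half_sq] using integrable_polyGaussian hb _

theorem prod_factorial_mul_factorial_le (α β : ι → ℕ) :
    ∏ i, (α i).factorial * (β i).factorial ≤ (∑ i, α i + ∑ i, β i).factorial := by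
  rw [Finset.prod_mul_distrib]
  exact Nat.le_of_dvd (Nat.factorial_pos _) <|
    (mul_dvd_mul (Nat.prod_factorial_dvd_factorial_sum ..)
      (Nat.prod_factorial_dvd_factorial_sum ..)).trans
      (Nat.factorial_mul_factorial_dvd_factorial_add ..)

theorem lintegral_enorm_prod_pow_mul_hermiteConv_sq_le (hb : 0 < b)
    {u : EuclideanSpace ℝ ι → ℝ} (hu : AEStronglyMeasurable u) (α β : ι → ℕ) :
    ∫⁻ x, ‖(∏ i, x i ^ β i) * hermiteConv b u α x‖ₑ ^ 2 ≤
      ENNReal.ofReal ((Real.pi / b) ^ Fintype.card ι * ((8 * (1 + 1 / (2 * b))) ^ (∑ i, β i) *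
        (2 * b) ^ (∑ i, α i) * (∑ i, α i + ∑ i, β i).factorial)) *
          ∫⁻ y, ‖(1 + ‖y‖) ^ (∑ i, β i) * u y‖ₑ ^ 2 := by
  refine (lintegral_enorm_prod_pow_mul_hermiteConv_sq_le_mul hb hu α β).trans ?_
  rw [← ENNReal.ofReal_mul (by positivity), ← Finset.prod_mul_distrib]
  simp only [integral_polyGaussian_gaussianHermite_sq hb]
  gcongr
  have hfactorial : (∏ i, (α i).factorial * (β i).factorial : ℝ) ≤
      (∑ i, α i + ∑ i, β i).factorial := by
    exact_mod_cast prod_factorial_mul_factorial_le α β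
  calc ∏ i, (∫ t, ((1 + |t|) ^ β i * Real.exp (-(b / 2) * t ^ 2)) ^ 2) *
          ((α i).factorial * (2 * b) ^ α i * √(Real.pi / b))
      ≤ ∏ i, (8 * (1 + 1 / (2 * b))) ^ β i * (β i).factorial * √(Real.pi / b) *
          ((α i).factorial * (2 * b) ^ α i * √(Real.pi / b)) := by
        gcongr with i
        exact integral_sq_one_add_abs_pow_mul_exp_le hb (β i)
    _ = ∏ i, Real.pi / b * ((8 * (1 + 1 / (2 * b))) ^ β i * (2 * b) ^ α i *
          ((α i).factorial * (β i).factorial)) := by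
        refine Finset.prod_congr rfl fun i _ => ?_
        linear_combination ((8 * (1 + 1 / (2 * b))) ^ β i * (2 * b) ^ α i *
          ((α i).factorial * (β i).factorial)) *
            Real.mul_self_sqrt (by positivity : 0 ≤ Real.pi / b)
    _ ≤ _ := by
        simp only [Finset.prod_mul_distrib, Finset.prod_const, Finset.card_univ,
          Finset.prod_pow_eq_pow_sum] at hfactorial ⊢
        gcongr

end WeightedEstimate

section HeatEstimate

variable {d : ℕ} {T : ℝ}

theorem sq_rpow_neg_div_two_mul_pow {a : ℝ} (ha : 0 < a) (n : ℕ) :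
    (a ^ (-(n : ℝ) / 2)) ^ 2 * a ^ n = 1 := by
  rw [← Real.rpow_mul_natCast ha.le, ← Real.rpow_natCast a n, ← Real.rpow_add ha]
  norm_num

theorem hermite_constant_le (hT : 0 < T) (m n : ℕ) :
    (8 * (1 + 1 / (2 * (1 / (4 * T))))) ^ n * (2 * (1 / (4 * T))) ^ m * (m + n).factorial ≤
      2 ^ (n + 1) * (3 ^ n * ((m + n).factorial : ℝ)) ^ 2 * (1 + T) ^ n / T ^ m := by
  have hbase : 8 * (1 + 1 / (2 * (1 / (4 * T)))) ≤ 2 * 3 ^ 2 * (1 + T) := by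
    field_simp
    linarith
  have htime : 2 * (1 / (4 * T)) ≤ 1 / T := by
    field_simp
    norm_num
  have hfactorial : ((m + n).factorial : ℝ) ≤ 2 * ((m + n).factorial : ℝ) ^ 2 := by
    have : (1 : ℝ) ≤ (m + n).factorial := by exact_mod_cast (m + n).factorial_pos
    nlinarith
  calc _ ≤ (2 * 3 ^ 2 * (1 + T)) ^ n * (1 / T) ^ m * (2 * ((m + n).factorial : ℝ) ^ 2) := by
        gcongr
    _ = _ := by
        rw [mul_pow, mul_pow, one_div_pow, pow_right_comm]
        ring

theorem lintegral_enorm_prod_pow_mul_mderiv_heatSol_sq_le (hT : 0 < T)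
    {u : EuclideanSpace ℝ (Fin d) → ℝ} (hu : MemLp u 2) (α β : Fin d → ℕ) :
    ∫⁻ x, ‖(∏ i, x i ^ β i) * mderiv d α (heatSol d u T) x‖ₑ ^ 2 ≤
      ENNReal.ofReal (2 ^ (∑ i, β i + 1) *
        (3 ^ (∑ i, β i) * ((∑ i, α i + ∑ i, β i).factorial : ℝ)) ^ 2 *
          (1 + T) ^ (∑ i, β i) / T ^ (∑ i, α i)) *
        ∫⁻ y, ‖(1 + ‖y‖) ^ (∑ i, β i) * u y‖ₑ ^ 2 := by
  have hb : 0 < 1 / (4 * T) := by positivity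
  have hnormalize := sq_rpow_neg_div_two_mul_pow (by positivity : 0 < 4 * Real.pi * T) d
  set c := (4 * Real.pi * T) ^ (-(d : ℝ) / 2)
  have hscale : Real.pi / (1 / (4 * T)) = 4 * Real.pi * T := by
    field_simp
  calc ∫⁻ x, ‖(∏ i, x i ^ β i) * mderiv d α (heatSol d u T) x‖ₑ ^ 2
      = ENNReal.ofReal (c ^ 2) *
          ∫⁻ x, ‖(∏ i, x i ^ β i) * hermiteConv (1 / (4 * T)) u α x‖ₑ ^ 2 := by
        rw [mderiv_heatSol hT hu, ← lintegral_const_mul' _ _ ENNReal.ofReal_ne_top]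
        simp only [Pi.smul_apply, smul_eq_mul, mul_left_comm _ c, enorm_mul c, mul_pow ‖c‖ₑ,
          enorm_sq_eq_ofReal_sq c, c]
    _ ≤ _ := by
        grw [lintegral_enorm_prod_pow_mul_hermiteConv_sq_le hb hu.aestronglyMeasurable,
          ← mul_assoc, ← ENNReal.ofReal_mul (sq_nonneg c), hscale, Fintype.card_fin, ← mul_assoc,
          hnormalize, one_mul, hermite_constant_le hT]

end HeatEstimate

/-- Weighted monomial-derivative estimate for the heat equation: for `T > 0` and
multi-indices `α, β ∈ ℕ^d`, any `u₀ ∈ L²(ℝ^d)` with `∫ (1+|x|)^{2|β|} |u₀|² dx < ∞`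
satisfies `∫ |x^β D^α u(T,x)|² dx
  ≤ 2^{|β|+1} (3^{|β|} (|α|+|β|)!)² (1+T)^{|β|} T^{-|α|} ∫ (1+|x|)^{2|β|} |u₀|² dx`. -/
theorem statement16 (d : ℕ) (hd : 0 < d) (T : ℝ) (hT : 0 < T) (α β : Fin d → ℕ)
    (u₀ : EuclideanSpace ℝ (Fin d) → ℝ) (hmem : MemLp u₀ 2 volume)
    (hint : Integrable (fun x => (1 + ‖x‖) ^ (2 * ∑ j, β j) * (u₀ x) ^ 2) volume) :
    ∫⁻ x, ENNReal.ofReal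
        ((∏ j, (x j) ^ (β j)) ^ 2 * (mderiv d α (heatSol d u₀ T) x) ^ 2) ∂volume
      ≤ ENNReal.ofReal
          ((2 : ℝ) ^ ((∑ j, β j) + 1) *
            ((3 : ℝ) ^ (∑ j, β j) * (Nat.factorial ((∑ j, α j) + ∑ j, β j) : ℝ)) ^ 2 *
            (1 + T) ^ (∑ j, β j) / T ^ (∑ j, α j) *
            ∫ x, (1 + ‖x‖) ^ (2 * ∑ j, β j) * (u₀ x) ^ 2) := by
  have hbound := lintegral_enorm_prod_pow_mul_mderiv_heatSol_sq_le hT hmem α β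
  simp only [enorm_sq_eq_ofReal_sq, mul_pow _ (u₀ _), mul_pow _ (mderiv ..), ← pow_mul,
    mul_comm _ 2] at hbound ⊢
  rwa [← ofReal_integral_eq_lintegral_ofReal hint (.of_forall fun x => by positivity),
    ← ENNReal.ofReal_mul (by positivity)] at hbound
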